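/- Let Φ be a theory in an FO-AEL language in which the modal operator 𝖫 occurs only applied to objective atomic formulas, let Γ be a set of objective formulas, and let X ∈ {E,A}. Then Γ = {φ objective | Φ ⊨ˣ_{Γ_oga} φ} if and only if Γ = T_o for some stableˣ expansion T of Φ. -/

import Mathlib

set_option autoImplicit false

/-! # First-order autoepistemic logic (FO-AEL): syntax -/

structure Sig : Type 1 where
  Func : Type
  Pred : Type
  arF : Func → ℕ
  arP : Pred → ℕ

inductive Term (S : Sig) : Type
  | var : ℕ → Term S
  | func : (f : S.Func) → (Fin (S.arF f) → Term S) → Term S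

inductive Formula (S : Sig) : Type
  | atom : (p : S.Pred) → (Fin (S.arP p) → Term S) → Formula S
  | eq : Term S → Term S → Formula S
  | not : Formula S → Formula S
  | and : Formula S → Formula S → Formula S
  | ex : ℕ → Formula S → Formula S
  | box : Formula S → Formula S

namespace Term

variable {S : Sig}

/-- A term is ground if it contains no variables; ground terms are the *names*. -/
def isGround : Term S → Prop
  | var _ => False
  | func _ ts => ∀ i, (ts i).isGround

def hasVar (x : ℕ) : Term S → Prop
  | var y => y = x
  | func _ ts => ∃ i, (ts i).hasVar x

/-- Application of a partial (name) substitution to a term. -/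
def subst (β : ℕ → Option (Term S)) : Term S → Term S
  | var x => (β x).getD (var x)
  | func f ts => func f (fun i => (ts i).subst β)

/-- The function symbols occurring in a term. -/
def funcs : Term S → Set S.Func
  | var _ => ∅
  | func f ts => insert f (⋃ i, (ts i).funcs)

/-- `t` is a name (ground term) over the set `F` of function symbols. -/
def isNameOf (F : Set S.Func) : Term S → Prop
  | var _ => False
  | func f ts => f ∈ F ∧ ∀ i, (ts i).isNameOf F

end Term

namespace Formula

variable {S : Sig}

/-- A formula is objective if it is 𝖫-free. -/
def isObjective : Formula S → Prop
  | atom _ _ => True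
  | eq _ _ => True
  | not φ => φ.isObjective
  | and φ ψ => φ.isObjective ∧ ψ.isObjective
  | ex _ φ => φ.isObjective
  | box _ => False

def isGround : Formula S → Prop
  | atom _ ts => ∀ i, (ts i).isGround
  | eq t₁ t₂ => t₁.isGround ∧ t₂.isGround
  | not φ => φ.isGround
  | and φ ψ => φ.isGround ∧ ψ.isGround
  | ex _ _ => False
  | box φ => φ.isGround

def isAtomic : Formula S → Prop
  | atom _ _ => True
  | eq _ _ => True
  | not _ => False
  | and _ _ => False
  | ex _ _ => False
  | box _ => False

/-- The modal operator 𝖫 occurs only applied to (objective) atomic formulas. -/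
def boxAtomic : Formula S → Prop
  | atom _ _ => True
  | eq _ _ => True
  | not φ => φ.boxAtomic
  | and φ ψ => φ.boxAtomic ∧ ψ.boxAtomic
  | ex _ φ => φ.boxAtomic
  | box φ => φ.isAtomic

/-- Propositional formulas: built from 0-ary predicates only. -/
def isPropositional : Formula S → Prop
  | atom p _ => S.arP p = 0
  | eq _ _ => False
  | not φ => φ.isPropositional
  | and φ ψ => φ.isPropositional ∧ ψ.isPropositional
  | ex _ _ => False
  | box _ => False

def freeIn (x : ℕ) : Formula S → Prop
  | atom _ ts => ∃ i, (ts i).hasVar x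
  | eq t₁ t₂ => t₁.hasVar x ∨ t₂.hasVar x
  | not φ => φ.freeIn x
  | and φ ψ => φ.freeIn x ∨ ψ.freeIn x
  | ex y φ => x ≠ y ∧ φ.freeIn x
  | box φ => φ.freeIn x

/-- A formula is closed (a sentence) if it has no free variables. -/
def closed (φ : Formula S) : Prop := ∀ x, ¬ φ.freeIn x

/-- Capture-avoiding application of a partial name substitution (values are ground). -/
def subst (β : ℕ → Option (Term S)) : Formula S → Formula S
  | atom p ts => atom p (fun i => (ts i).subst β)
  | eq t₁ t₂ => eq (t₁.subst β) (t₂.subst β)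
  | not φ => not (φ.subst β)
  | and φ ψ => and (φ.subst β) (ψ.subst β)
  | ex y φ => ex y (φ.subst (fun z => if z = y then none else β z))
  | box φ => box (φ.subst β)

def funcs : Formula S → Set S.Func
  | atom _ ts => ⋃ i, (ts i).funcs
  | eq t₁ t₂ => t₁.funcs ∪ t₂.funcs
  | not φ => φ.funcs
  | and φ ψ => φ.funcs ∪ ψ.funcs
  | ex _ φ => φ.funcs
  | box φ => φ.funcs

def preds : Formula S → Set S.Pred
  | atom p _ => {p}
  | eq _ _ => ∅
  | not φ => φ.preds
  | and φ ψ => φ.preds ∪ ψ.preds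
  | ex _ φ => φ.preds
  | box φ => φ.preds

/-- `φ ∨ ψ` as an abbreviation: `¬(¬φ ∧ ¬ψ)`. -/
def or (φ ψ : Formula S) : Formula S := not (and (not φ) (not ψ))

/-- `φ ⊃ ψ` as an abbreviation: `¬(φ ∧ ¬ψ)`. -/
def imp (φ ψ : Formula S) : Formula S := not (and φ (not ψ))

/-- `∀x.φ` as an abbreviation: `¬∃x.¬φ`. -/
def all (x : ℕ) (φ : Formula S) : Formula S := not (ex x (not φ))

end Formula

/-! ## Semantics -/

structure Interp (S : Sig) where
  U : Type
  nonempty : Nonempty U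
  interpF : (f : S.Func) → (Fin (S.arF f) → U) → U
  interpP : (p : S.Pred) → (Fin (S.arP p) → U) → Prop

noncomputable def Interp.dflt {S : Sig} (w : Interp S) : w.U := Classical.choice w.nonempty

def Term.eval {S : Sig} (w : Interp S) (B : ℕ → w.U) : Term S → w.U
  | Term.var x => B x
  | Term.func f ts => w.interpF f (fun i => (ts i).eval w B)

/-- Evaluation of a ground term (the assignment is irrelevant). -/
noncomputable def Term.evalG {S : Sig} (w : Interp S) (t : Term S) : w.U :=
  t.eval w (fun _ => w.dflt)

/-- An individual is named if some name (ground term) denotes it. -/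
def IsNamed {S : Sig} (w : Interp S) (k : w.U) : Prop :=
  ∃ t : Term S, t.isGround ∧ Term.evalG w t = k

/-- A name substitution `β` is associated with the variable assignment `B`:
its domain is exactly the set of variables whose `B`-value is named, and
it assigns to each such variable a name denoting its `B`-value. -/
def Assoc {S : Sig} (w : Interp S) (B : ℕ → w.U) (β : ℕ → Option (Term S)) : Prop :=
  ∀ x : ℕ,
    (IsNamed w (B x) → (β x).isSome) ∧
    (∀ t : Term S, β x = some t → t.isGround ∧ Term.evalG w t = B x)

/-- The two semantics: any-name (E) and all-name (A). -/
inductive Sem : Type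
  | any
  | all

/-- Satisfaction of a formula in an autoepistemic interpretation `⟨w,Γ⟩`
under a variable assignment, for the any-name (E) resp. all-name (A) semantics. -/
def Sat {S : Sig} (X : Sem) (w : Interp S) (Γ : Set (Formula S)) :
    Formula S → (ℕ → w.U) → Prop
  | Formula.atom p ts, B => w.interpP p (fun i => (ts i).eval w B)
  | Formula.eq t₁ t₂, B => t₁.eval w B = t₂.eval w B
  | Formula.not φ, B => ¬ Sat X w Γ φ B
  | Formula.and φ ψ, B => Sat X w Γ φ B ∧ Sat X w Γ ψ B
  | Formula.ex x φ, B => ∃ u : w.U, Sat X w Γ φ (Function.update B x u)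
  | Formula.box φ, B =>
      match X with
      | Sem.any => ∃ β, Assoc w B β ∧ (φ.subst β).closed ∧ φ.subst β ∈ Γ
      | Sem.all => ∀ β, Assoc w B β → (φ.subst β).closed ∧ φ.subst β ∈ Γ

def ModelsF {S : Sig} (X : Sem) (w : Interp S) (Γ : Set (Formula S)) (φ : Formula S) : Prop :=
  ∀ B : ℕ → w.U, Sat X w Γ φ B

def ModelsT {S : Sig} (X : Sem) (w : Interp S) (Γ Φ : Set (Formula S)) : Prop :=
  ∀ φ ∈ Φ, ModelsF X w Γ φ

/-- `Φ ⊨ˣ_Γ φ`. -/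
def Entails {S : Sig} (X : Sem) (Φ Γ : Set (Formula S)) (φ : Formula S) : Prop :=
  ∀ w : Interp S, ModelsT X w Γ Φ → ModelsF X w Γ φ

/-- The standard names assumption: all names are interpreted distinctly
and every individual is named. -/
def SNA {S : Sig} (w : Interp S) : Prop :=
  (∀ t₁ t₂ : Term S, t₁.isGround → t₂.isGround → Term.evalG w t₁ = Term.evalG w t₂ → t₁ = t₂) ∧
  (∀ k : w.U, IsNamed w k)

/-- Entailment restricted to interpretations satisfying the standard names assumption. -/
def EntailsSN {S : Sig} (X : Sem) (Φ Γ : Set (Formula S)) (φ : Formula S) : Prop :=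
  ∀ w : Interp S, SNA w → ModelsT X w Γ Φ → ModelsF X w Γ φ

/-- `T` is a stableˣ expansion of `Φ`. -/
def StableExp {S : Sig} (X : Sem) (Φ T : Set (Formula S)) : Prop :=
  T = {φ | Entails X Φ T φ}

def objOf {S : Sig} (T : Set (Formula S)) : Set (Formula S) :=
  {φ ∈ T | φ.isObjective}

def ogOf {S : Sig} (T : Set (Formula S)) : Set (Formula S) :=
  {φ ∈ T | φ.isObjective ∧ φ.isGround}

def ogaOf {S : Sig} (T : Set (Formula S)) : Set (Formula S) :=
  {φ ∈ T | φ.isObjective ∧ φ.isGround ∧ φ.isAtomic}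

def Consistent {S : Sig} (T : Set (Formula S)) : Prop := T ≠ Set.univ

/-- `Φ₁ ≡ˣ Φ₂`: same stableˣ expansions. -/
def ExpEquiv {S : Sig} (X : Sem) (Φ₁ Φ₂ : Set (Formula S)) : Prop :=
  ∀ T, StableExp X Φ₁ T ↔ StableExp X Φ₂ T

/-- `Φ₁ ≡ˣ_γ Φ₂` for a selector `sel` (e.g. `ogaOf`): the stableˣ expansions
correspond with respect to `sel`. -/
def ExpEquivSel {S : Sig} (X : Sem) (sel : Set (Formula S) → Set (Formula S))
    (Φ₁ Φ₂ : Set (Formula S)) : Prop :=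
  (∀ T, StableExp X Φ₁ T → ∃ T', StableExp X Φ₂ T' ∧ sel T = sel T') ∧
  (∀ T', StableExp X Φ₂ T' → ∃ T, StableExp X Φ₁ T ∧ sel T = sel T')

/-- Autoepistemicˣ consequences of `Φ`. -/
def Cn {S : Sig} (X : Sem) (Φ : Set (Formula S)) : Set (Formula S) :=
  {φ | ∀ T, StableExp X Φ T → φ ∈ T}

def CnO {S : Sig} (X : Sem) (Φ : Set (Formula S)) : Set (Formula S) :=
  {φ ∈ Cn X Φ | φ.isObjective}

def CnOg {S : Sig} (X : Sem) (Φ : Set (Formula S)) : Set (Formula S) :=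
  {φ ∈ Cn X Φ | φ.isObjective ∧ φ.isGround}

/-! ## Logic programs -/

structure PAtom (S : Sig) where
  p : S.Pred
  args : Fin (S.arP p) → Term S

namespace PAtom

variable {S : Sig}

def toFormula (a : PAtom S) : Formula S := Formula.atom a.p a.args

def isGround (a : PAtom S) : Prop := ∀ i, (a.args i).isGround

def hasVar (x : ℕ) (a : PAtom S) : Prop := ∃ i, (a.args i).hasVar x

def substA (σ : ℕ → Term S) (a : PAtom S) : PAtom S :=
  ⟨a.p, fun i => (a.args i).subst (fun x => some (σ x))⟩

def funcs (a : PAtom S) : Set S.Func := ⋃ i, (a.args i).funcs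

end PAtom

/-- A (disjunctive) rule `h₁ | … | h_l ← b₁,…,b_m, not c₁,…,not c_n`,
together with a list of the variables occurring in it. -/
structure Rule (S : Sig) where
  head : List (PAtom S)
  pos : List (PAtom S)
  neg : List (PAtom S)
  vars : List ℕ

namespace Rule

variable {S : Sig}

def atoms (r : Rule S) : List (PAtom S) := r.head ++ r.pos ++ r.neg

def hasVar (x : ℕ) (r : Rule S) : Prop := ∃ a ∈ r.atoms, PAtom.hasVar x a

/-- Well-formedness: at least one head atom, and `vars` lists all variables of the rule. -/
def wf (r : Rule S) : Prop := r.head ≠ [] ∧ ∀ x, r.hasVar x → x ∈ r.vars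

def isNormal (r : Rule S) : Prop := r.head.length = 1

def isGround (r : Rule S) : Prop := (∀ a ∈ r.atoms, a.isGround) ∧ r.vars = []

def isSafe (r : Rule S) : Prop := ∀ x, r.hasVar x → ∃ a ∈ r.pos, PAtom.hasVar x a

def isPositive (r : Rule S) : Prop := r.neg = []

def applySubst (σ : ℕ → Term S) (r : Rule S) : Rule S :=
  ⟨r.head.map (PAtom.substA σ), r.pos.map (PAtom.substA σ), r.neg.map (PAtom.substA σ), []⟩

end Rule

abbrev Program (S : Sig) := Set (Rule S)

def progWf {S : Sig} (P : Program S) : Prop := ∀ r ∈ P, r.wf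
def progNormal {S : Sig} (P : Program S) : Prop := ∀ r ∈ P, r.isNormal
def progGround {S : Sig} (P : Program S) : Prop := ∀ r ∈ P, r.isGround
def progSafe {S : Sig} (P : Program S) : Prop := ∀ r ∈ P, r.isSafe
def progPositive {S : Sig} (P : Program S) : Prop := ∀ r ∈ P, r.isPositive

/-- The function symbols occurring in `P` (part of the signature `Σ_P`). -/
def progFuncs {S : Sig} (P : Program S) : Set S.Func :=
  {f | ∃ r ∈ P, ∃ a ∈ r.atoms, f ∈ a.funcs}

/-- The predicate symbols occurring in `P` (part of the signature `Σ_P`). -/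
def progPreds {S : Sig} (P : Program S) : Set S.Pred :=
  {q | ∃ r ∈ P, ∃ a ∈ r.atoms, a.p = q}

/-- The ambient signature is exactly the signature `Σ_P` of `P`. -/
def fullSig {S : Sig} (P : Program S) : Prop :=
  (∀ f : S.Func, f ∈ progFuncs P) ∧ (∀ q : S.Pred, q ∈ progPreds P)

/-- Standing assumption: `Σ_P` contains a 0-ary function symbol whenever it
has a predicate symbol of arity greater than 0. -/
def goodSig {S : Sig} (P : Program S) : Prop :=
  (∃ q ∈ progPreds P, 0 < S.arP q) → ∃ f ∈ progFuncs P, S.arF f = 0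

/-! ## Embeddings of logic programs into FO-AEL -/

def andAll {S : Sig} : Formula S → List (Formula S) → Formula S
  | φ, [] => φ
  | φ, ψ :: rest => andAll (Formula.and φ ψ) rest

def orAll {S : Sig} : Formula S → List (Formula S) → Formula S
  | φ, [] => φ
  | φ, ψ :: rest => orAll (Formula.or φ ψ) rest

/-- `impOf ants c` is `⋀ ants ⊃ c` (just `c` if there are no antecedents). -/
def impOf {S : Sig} : List (Formula S) → Formula S → Formula S
  | [], c => c
  | a :: rest, c => Formula.imp (andAll a rest) c

/-- Disjunction of a nonempty list (junk value on the empty list,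
which is excluded by rule well-formedness). -/
def disjOf {S : Sig} : List (Formula S) → Formula S
  | [] => Formula.eq (Term.var 0) (Term.var 0)
  | h :: rest => orAll h rest

/-- Universal uclosure over the listed variables. -/
def uclosure {S : Sig} (vs : List ℕ) (φ : Formula S) : Formula S :=
  vs.foldr Formula.all φ

def bodyHP {S : Sig} (r : Rule S) : List (Formula S) :=
  r.pos.map PAtom.toFormula ++ r.neg.map (fun c => Formula.not (Formula.box c.toFormula))

def bodyE {S : Sig} (r : Rule S) : List (Formula S) :=
  r.pos.map (fun b => Formula.and b.toFormula (Formula.box b.toFormula)) ++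
    r.neg.map (fun c => Formula.not (Formula.box c.toFormula))

/-- `τ_HP(r)` resp. `τ^∨_HP(r)`. -/
def embHP {S : Sig} (r : Rule S) : Formula S :=
  uclosure r.vars (impOf (bodyHP r) (disjOf (r.head.map PAtom.toFormula)))

/-- `τ_EB(r)` resp. `τ^∨_EB(r)`. -/
def embEB {S : Sig} (r : Rule S) : Formula S :=
  uclosure r.vars (impOf (bodyE r) (disjOf (r.head.map PAtom.toFormula)))

/-- `τ_EH(r)` resp. `τ^∨_EH(r)`. -/
def embEH {S : Sig} (r : Rule S) : Formula S :=
  uclosure r.vars (impOf (bodyE r)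
    (disjOf (r.head.map (fun h => Formula.and h.toFormula (Formula.box h.toFormula)))))

/-- The unique-names axioms `¬𝖫(t₁=t₂) ⊃ t₁≠t₂` for distinct names of `Σ_P`. -/
def UNAax {S : Sig} (P : Program S) : Set (Formula S) :=
  {φ | ∃ t₁ t₂ : Term S, t₁.isNameOf (progFuncs P) ∧ t₂.isNameOf (progFuncs P) ∧ t₁ ≠ t₂ ∧
        φ = Formula.imp (Formula.not (Formula.box (Formula.eq t₁ t₂)))
              (Formula.not (Formula.eq t₁ t₂))}

/-- The positive introspection axioms `α ⊃ 𝖫α` for objective ground atoms of `Σ_P`. -/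
def PIAax {S : Sig} (P : Program S) : Set (Formula S) :=
  {φ | ∃ a : PAtom S, a.p ∈ progPreds P ∧ (∀ i, (a.args i).isNameOf (progFuncs P)) ∧
        φ = Formula.imp a.toFormula (Formula.box a.toFormula)}

def ruleEmb {S : Sig} (emb : Rule S → Formula S) (P : Program S) : Set (Formula S) :=
  {φ | ∃ r ∈ P, φ = emb r}

def tauHP {S : Sig} (P : Program S) : Set (Formula S) := ruleEmb embHP P ∪ UNAax P
def tauEB {S : Sig} (P : Program S) : Set (Formula S) := ruleEmb embEB P ∪ UNAax P
def tauEH {S : Sig} (P : Program S) : Set (Formula S) := ruleEmb embEH P ∪ UNAax P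
def tauHPv {S : Sig} (P : Program S) : Set (Formula S) := ruleEmb embHP P ∪ PIAax P ∪ UNAax P
def tauEBv {S : Sig} (P : Program S) : Set (Formula S) := ruleEmb embEB P ∪ PIAax P ∪ UNAax P
def tauEHv {S : Sig} (P : Program S) : Set (Formula S) := ruleEmb embEH P ∪ UNAax P
def tauHPminus {S : Sig} (P : Program S) : Set (Formula S) := ruleEmb embHP P
def tauEHvminus {S : Sig} (P : Program S) : Set (Formula S) := ruleEmb embEH P

/-! ## Grounding and stable models -/

/-- The grounding of `P`: all ground instantiations of rules of `P`
obtained by replacing variables with names of `Σ_P`. -/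
def grP {S : Sig} (P : Program S) : Program S :=
  {r' | ∃ r ∈ P, ∃ σ : ℕ → Term S,
        (∀ x, r.hasVar x → (σ x).isNameOf (progFuncs P)) ∧ r' = Rule.applySubst σ r}

/-- A Herbrand interpretation: a set of ground atomic formulas. -/
def HerbrandI {S : Sig} (M : Set (Formula S)) : Prop :=
  ∀ φ ∈ M, φ.isAtomic ∧ φ.isGround

/-- `M` is a Herbrand model of the positive ground program `Q` (relative to the
names of `Σ_P`): rules are satisfied and `t = t ∈ M` for every name `t`. -/
def HerbrandModelOf {S : Sig} (P Q : Program S) (M : Set (Formula S)) : Prop :=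
  HerbrandI M ∧
  (∀ r ∈ Q, (∀ b ∈ r.pos, PAtom.toFormula b ∈ M) → ∃ h ∈ r.head, PAtom.toFormula h ∈ M) ∧
  (∀ t : Term S, t.isNameOf (progFuncs P) → Formula.eq t t ∈ M)

/-- The Gelfond–Lifschitz reduct of `gr(P)` with respect to `M`. -/
def reduct {S : Sig} (P : Program S) (M : Set (Formula S)) : Program S :=
  {r' | ∃ r ∈ grP P, (∀ c ∈ r.neg, PAtom.toFormula c ∉ M) ∧
        r' = ⟨r.head, r.pos, [], r.vars⟩}

/-- `M` is a stable model of `P`: a minimal Herbrand model of the reduct of `gr(P)` w.r.t. `M`. -/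
def isStableModel {S : Sig} (P : Program S) (M : Set (Formula S)) : Prop :=
  HerbrandModelOf P (reduct P M) M ∧
  ∀ M', M' ⊆ M → HerbrandModelOf P (reduct P M) M' → M' = M

/-! ## First-order theories and classes thereof -/

/-- An FO theory: a set of objective sentences. -/
def FOTheory {S : Sig} (Φ : Set (Formula S)) : Prop :=
  ∀ φ ∈ Φ, φ.isObjective ∧ φ.closed

def theoryFuncs {S : Sig} (Φ : Set (Formula S)) : Set S.Func := {f | ∃ φ ∈ Φ, f ∈ φ.funcs}
def theoryPreds {S : Sig} (Φ : Set (Formula S)) : Set S.Pred := {q | ∃ φ ∈ Φ, q ∈ φ.preds}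

/-- The ambient signature is exactly the union of the signatures of `Φ` and `P`. -/
def CoverSig {S : Sig} (Φ : Set (Formula S)) (P : Program S) : Prop :=
  (∀ f : S.Func, f ∈ theoryFuncs Φ ∪ progFuncs P) ∧
  (∀ q : S.Pred, q ∈ theoryPreds Φ ∪ progPreds P)

def exClosure {S : Sig} (ys : List ℕ) (φ : Formula S) : Formula S := ys.foldr Formula.ex φ

/-- A Horn sentence `(∀)(b₁ ∧ … ∧ b_n ⊃ h)` with atomic `b_i`, `h`
(the consequent `h` may be absent). -/
def isHornSentence {S : Sig} (φ : Formula S) : Prop :=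
  ∃ (vs : List ℕ) (bs : List (Formula S)),
    (∀ b ∈ bs, b.isAtomic) ∧
    ((∃ h : Formula S, h.isAtomic ∧ φ = uclosure vs (impOf bs h)) ∨
     (∃ b rest, bs = b :: rest ∧ φ = uclosure vs (Formula.not (andAll b rest))))

def HornTheory {S : Sig} (Φ : Set (Formula S)) : Prop :=
  FOTheory Φ ∧ ∀ φ ∈ Φ, isHornSentence φ

/-- A generalized Horn sentence `(∀)(b₁ ∧ … ∧ b_n ⊃ ∃ȳ.h)` with atomic `b_i`, `h`,
the variables `ȳ` occurring only in `h` (the consequent may be absent). -/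
def isGHornSentence {S : Sig} (φ : Formula S) : Prop :=
  ∃ (vs : List ℕ) (bs : List (Formula S)),
    (∀ b ∈ bs, b.isAtomic) ∧
    ((∃ (ys : List ℕ) (h : Formula S), h.isAtomic ∧
        (∀ y ∈ ys, ∀ b ∈ bs, ¬ b.freeIn y) ∧
        φ = uclosure vs (impOf bs (exClosure ys h))) ∨
     (∃ b rest, bs = b :: rest ∧ φ = uclosure vs (Formula.not (andAll b rest))))

def GHornTheory {S : Sig} (Φ : Set (Formula S)) : Prop :=
  FOTheory Φ ∧ ∀ φ ∈ Φ, isGHornSentence φ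

def PropTheory {S : Sig} (Φ : Set (Formula S)) : Prop :=
  FOTheory Φ ∧ ∀ φ ∈ Φ, φ.isPropositional

/-! The truth of `φ` depends on the belief set only through the closed instances of the formulas
that `φ` puts under an outermost `𝖫`, its belief queries. An objective `φ` has none, so the
objective part of an expansion is determined by the models of `Φ` alone; these in turn depend only
on the beliefs that `Φ` queries, which here are objective ground atoms. Conversely, a belief query
of `φ` has smaller modal depth than `φ`. Hence for any fixed class `W` of interpretations the
equation `T = {φ | ⟨w, T⟩ satisfies φ for all w ∈ W}` is solved by recursion on modal depth. Taking
for `W` the models of `Φ` relative to `Γ_oga` gives an expansion whose objective part is `Γ`. -/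

theorem Term.isGround_of_forall_not_hasVar {S : Sig} {t : Term S} (h : ∀ x, ¬ t.hasVar x) :
    t.isGround := by
  induction t with
  | var y => exact h y rfl
  | func f ts ih => exact fun i => ih i fun x hx => h x ⟨i, hx⟩

namespace Formula

variable {S : Sig}

/-- The sentences whose membership in the belief set determines the truth of a formula: the closed
instances, under name substitutions, of the arguments of its outermost occurrences of `𝖫`. All
partial substitutions are admitted here, including those whose values are not ground. -/
def beliefQueries : Formula S → Set (Formula S)
  | atom _ _ => ∅
  | eq _ _ => ∅
  | not φ => φ.beliefQueries
  | and φ ψ => φ.beliefQueries ∪ ψ.beliefQueries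
  | ex _ φ => φ.beliefQueries
  | box φ => {ψ | ψ.closed ∧ ∃ β, φ.subst β = ψ}

theorem beliefQueries_eq_empty_of_isObjective (φ : Formula S) (h : φ.isObjective) :
    φ.beliefQueries = ∅ := by
  induction φ with
  | atom | eq => rfl
  | not φ ih => exact ih h
  | and φ ψ ihφ ihψ => exact Set.union_empty_iff.2 ⟨ihφ h.1, ihψ h.2⟩
  | ex x φ ih => exact ih h
  | box φ => exact h.elim

theorem isAtomic.subst {φ : Formula S} (h : φ.isAtomic) (β : ℕ → Option (Term S)) :
    (φ.subst β).isAtomic := by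
  cases φ <;> exact h

theorem isAtomic.isObjective {φ : Formula S} (h : φ.isAtomic) : φ.isObjective := by
  cases φ with
  | atom | eq => trivial
  | not | and | ex | box => exact h.elim

theorem isAtomic.isGround_of_closed {φ : Formula S} (h : φ.isAtomic) (hc : φ.closed) :
    φ.isGround := by
  cases φ with
  | atom p ts => exact fun i => Term.isGround_of_forall_not_hasVar fun x hx => hc x ⟨i, hx⟩
  | eq t u =>
    exact ⟨Term.isGround_of_forall_not_hasVar fun x hx => hc x (Or.inl hx),
      Term.isGround_of_forall_not_hasVar fun x hx => hc x (Or.inr hx)⟩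
  | not | and | ex | box => exact h.elim

theorem beliefQueries_subset_of_boxAtomic (φ : Formula S) (h : φ.boxAtomic) :
    φ.beliefQueries ⊆ {ψ | ψ.isObjective ∧ ψ.isGround ∧ ψ.isAtomic} := by
  induction φ with
  | atom | eq => exact Set.empty_subset _
  | not φ ih => exact ih h
  | and φ ψ ihφ ihψ => exact Set.union_subset (ihφ h.1) (ihψ h.2)
  | ex x φ ih => exact ih h
  | box φ =>
    rintro _ ⟨hc, β, rfl⟩
    have hβ : (φ.subst β).isAtomic := isAtomic.subst h β
    exact ⟨hβ.isObjective, hβ.isGround_of_closed hc, hβ⟩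

/-- The nesting depth of `𝖫` in a formula, along which self-referential belief sets are built. -/
def modalDepth : Formula S → ℕ
  | atom _ _ => 0
  | eq _ _ => 0
  | not φ => φ.modalDepth
  | and φ ψ => max φ.modalDepth ψ.modalDepth
  | ex _ φ => φ.modalDepth
  | box φ => φ.modalDepth + 1

theorem modalDepth_subst (φ : Formula S) (β : ℕ → Option (Term S)) :
    (φ.subst β).modalDepth = φ.modalDepth := by
  induction φ generalizing β <;> simp_all only [subst, modalDepth]

theorem modalDepth_lt_of_mem_beliefQueries {φ ψ : Formula S} (h : ψ ∈ φ.beliefQueries) :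
    ψ.modalDepth < φ.modalDepth := by
  induction φ with
  | atom | eq => exact h.elim
  | not φ ih => exact ih h
  | and φ₁ φ₂ ih₁ ih₂ => exact lt_max_iff.2 (h.imp ih₁ ih₂)
  | ex x φ ih => exact ih h
  | box φ =>
    obtain ⟨-, β, rfl⟩ := h
    exact (φ.modalDepth_subst β).trans_lt (Nat.lt_succ_self _)

end Formula

section Semantics

variable {S : Sig} (X : Sem) {Γ Δ A Φ T : Set (Formula S)}

theorem sat_congr_of_beliefQueries (w : Interp S) {φ : Formula S}
    (h : ∀ ψ ∈ φ.beliefQueries, ψ ∈ Γ ↔ ψ ∈ Δ) (B : ℕ → w.U) :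
    Sat X w Γ φ B ↔ Sat X w Δ φ B := by
  induction φ generalizing B with
  | atom | eq => exact Iff.rfl
  | not φ ih => exact not_congr (ih h B)
  | and φ ψ ihφ ihψ =>
    exact and_congr (ihφ (fun χ hχ => h χ (Or.inl hχ)) B) (ihψ (fun χ hχ => h χ (Or.inr hχ)) B)
  | ex x φ ih => exact exists_congr fun u => ih h _
  | box φ =>
    have hβ (β : ℕ → Option (Term S)) : (φ.subst β).closed ∧ φ.subst β ∈ Γ ↔
        (φ.subst β).closed ∧ φ.subst β ∈ Δ :=
      and_congr_right fun hc => h _ ⟨hc, β, rfl⟩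
    cases X with
    | any => exact exists_congr fun β => and_congr_right fun _ => hβ β
    | all => exact forall_congr' fun β => imp_congr_right fun _ => hβ β

theorem modelsF_congr_of_beliefQueries (w : Interp S) {φ : Formula S}
    (h : ∀ ψ ∈ φ.beliefQueries, ψ ∈ Γ ↔ ψ ∈ Δ) : ModelsF X w Γ φ ↔ ModelsF X w Δ φ :=
  forall_congr' (sat_congr_of_beliefQueries X w h)

theorem modelsF_congr_of_isObjective (Γ Δ : Set (Formula S)) (w : Interp S) {φ : Formula S}
    (h : φ.isObjective) : ModelsF X w Γ φ ↔ ModelsF X w Δ φ :=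
  modelsF_congr_of_beliefQueries X w (by simp [φ.beliefQueries_eq_empty_of_isObjective h])

theorem modelsT_inter_iff (w : Interp S) (hΦ : ∀ φ ∈ Φ, φ.beliefQueries ⊆ A) :
    ModelsT X w (Γ ∩ A) Φ ↔ ModelsT X w Γ Φ :=
  forall₂_congr fun φ hφ => modelsF_congr_of_beliefQueries X w fun _ hψ =>
    and_iff_left (hΦ φ hφ hψ)

theorem entails_inter_iff_of_isObjective (hΦ : ∀ φ ∈ Φ, φ.beliefQueries ⊆ A) {φ : Formula S}
    (hφ : φ.isObjective) : Entails X Φ (Γ ∩ A) φ ↔ Entails X Φ Γ φ :=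
  forall_congr' fun w =>
    imp_congr (modelsT_inter_iff X w hΦ) (modelsF_congr_of_isObjective X _ _ w hφ)

/-- The formulas known when the worlds considered possible are those in `W` and beliefs are
evaluated by reference to this very notion. The recursion consults it only on the belief queries
of `φ`, where the modal depth has dropped. -/
def IsKnown (W : Set (Interp S)) (φ : Formula S) : Prop :=
  ∀ w ∈ W, ModelsF X w {ψ | ∃ _ : ψ ∈ φ.beliefQueries, IsKnown W ψ} φ
termination_by φ.modalDepth
decreasing_by exact Formula.modalDepth_lt_of_mem_beliefQueries ‹_›

theorem isKnown_iff (W : Set (Interp S)) (φ : Formula S) :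
    IsKnown X W φ ↔ ∀ w ∈ W, ModelsF X w {ψ | IsKnown X W ψ} φ := by
  rw [IsKnown]
  exact forall₂_congr fun w _ => modelsF_congr_of_beliefQueries X w fun ψ hψ =>
    exists_prop_of_true hψ

theorem objOf_inter (hA : ∀ ψ ∈ A, ψ.isObjective) : objOf T ∩ A = T ∩ A :=
  Set.ext fun ψ => and_congr_left fun hψ => and_iff_left (hA ψ hψ)

theorem StableExp.objOf_eq (hT : StableExp X Φ T) (hΦ : ∀ φ ∈ Φ, φ.beliefQueries ⊆ A) :
    objOf T = {φ | φ.isObjective ∧ Entails X Φ (T ∩ A) φ} := by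
  ext φ
  calc φ ∈ T ∧ φ.isObjective
    _ ↔ φ.isObjective ∧ φ ∈ T := and_comm
    _ ↔ φ.isObjective ∧ Entails X Φ (T ∩ A) φ := and_congr_right fun hφ =>
      (Set.ext_iff.1 hT φ).trans (entails_inter_iff_of_isObjective X hΦ hφ).symm

theorem objOf_setOf_isKnown (Φ Γ : Set (Formula S)) :
    objOf {φ | IsKnown X {w | ModelsT X w Γ Φ} φ} = {φ | φ.isObjective ∧ Entails X Φ Γ φ} := by
  ext φ
  refine and_comm.trans (and_congr_right fun hφ => (isKnown_iff X _ φ).trans ?_)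
  exact forall₂_congr fun w _ => modelsF_congr_of_isObjective X _ _ w hφ

theorem stableExp_setOf_isKnown (hA : ∀ ψ ∈ A, ψ.isObjective)
    (hΦ : ∀ φ ∈ Φ, φ.beliefQueries ⊆ A)
    (hΓ : Γ = {φ | φ.isObjective ∧ Entails X Φ (Γ ∩ A) φ}) :
    StableExp X Φ {φ | IsKnown X {w | ModelsT X w (Γ ∩ A) Φ} φ} := by
  set T := {φ | IsKnown X {w | ModelsT X w (Γ ∩ A) Φ} φ}
  have hΓT : Γ = objOf T := hΓ.trans (objOf_setOf_isKnown X Φ (Γ ∩ A)).symm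
  have hmodels (w : Interp S) : ModelsT X w (Γ ∩ A) Φ ↔ ModelsT X w T Φ := by
    rw [hΓT, objOf_inter hA, modelsT_inter_iff X w hΦ]
  ext φ
  exact (isKnown_iff X _ φ).trans (forall_congr' fun w => imp_congr_left (hmodels w))

end Semantics

theorem stmt0_general {S : Sig} (X : Sem) (Φ Γ A : Set (Formula S))
    (hA : ∀ ψ ∈ A, ψ.isObjective) (hΦ : ∀ φ ∈ Φ, φ.beliefQueries ⊆ A) :
    Γ = {φ | φ.isObjective ∧ Entails X Φ (Γ ∩ A) φ} ↔
      ∃ T : Set (Formula S), StableExp X Φ T ∧ Γ = objOf T := by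
  constructor
  · intro hΓ
    exact ⟨_, stableExp_setOf_isKnown X hA hΦ hΓ, hΓ.trans (objOf_setOf_isKnown X Φ (Γ ∩ A)).symm⟩
  · rintro ⟨T, hT, rfl⟩
    rw [objOf_inter hA]
    exact hT.objOf_eq X hΦ

/-- Proposition 2: For a theory `Φ` in which 𝖫 occurs only applied to
objective atomic formulas, and a set `Γ` of objective formulas,
`Γ = {φ objective | Φ ⊨ˣ_{Γ_oga} φ}` iff `Γ = T_o` for some stableˣ expansion `T` of `Φ`. -/
theorem stmt0 {S : Sig} (X : Sem) (Φ Γ : Set (Formula S))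
    (hΦclosed : ∀ φ ∈ Φ, Formula.closed φ)
    (hΦbox : ∀ φ ∈ Φ, Formula.boxAtomic φ)
    (hΓobj : ∀ φ ∈ Γ, Formula.isObjective φ) :
    Γ = {φ : Formula S | φ.isObjective ∧ Entails X Φ (ogaOf Γ) φ} ↔
      ∃ T : Set (Formula S), StableExp X Φ T ∧ Γ = objOf T :=
  stmt0_general X Φ Γ {φ | φ.isObjective ∧ φ.isGround ∧ φ.isAtomic} (fun _ hψ => hψ.1)
    fun φ hφ => φ.beliefQueries_subset_of_boxAtomic (hΦbox φ hφ)
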